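/- arXiv:0910.0443 — 7 statements merged into one kernel-verified Lean document; each statement's English description precedes it below -/
import Mathlib

section
/- Let M ≥ 2 and ℓ ≥ 1 be integers and let r_1,…,r_M be a sequence of constraints such that for every i, at most 3^ℓ indices j ∈ {1,…,M} satisfy q_1(r_j) = q_1(r_i) and at most 5^ℓ indices j satisfy q_2(r_j) = q_2(r_i). Then for every real δ with 1/M < δ and every real γ ≥ 8·δ·5^ℓ, there exists a permutation σ of {1,…,M} such that the reordered sequence r_{σ(1)},…,r_{σ(M)} is (δ,γ)-far. -/
/-!
The permutation is built greedily from the last position to the first. Put `k = ⌈δM⌉` and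
`d = 3^ℓ + 5^ℓ`, so that each constraint shares a query with at most `d` constraints. When position
`p` is to be filled, at most `k * d` constraints conflict with one of the `k` following positions,
so a suitable constraint exists among the `p + 1` not yet used as soon as `k * d < p + 1`; it is
swapped into position `p`, which leaves the later positions untouched
(`exists_perm_far_from`). Hence all positions but the first `k * d` are `δ`-far. Finally
`δM > 1` gives `k ≤ 2δM`, so `k * d ≤ 2δM * (2 * 5^ℓ) ≤ γM`.
-/

/-- Position `i` (0-indexed) of the reordered sequence `r_{σ(0)},…,r_{σ(M-1)}` is `δ`-far:
for every later position `j` with `i < j ≤ i + ⌈δM⌉` (and `j` within range),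
the constraint at position `j` shares no query with the constraint at position `i`. -/
def DeltaFarAt (M : ℕ) {Q1 Q2 : Type} (q1 : Fin M → Q1) (q2 : Fin M → Q2) (δ : ℝ)
    (σ : Equiv.Perm (Fin M)) (i : Fin M) : Prop :=
  ∀ j : Fin M, (i : ℕ) < (j : ℕ) → (j : ℕ) ≤ (i : ℕ) + ⌈δ * (M : ℝ)⌉₊ →
    q1 (σ j) ≠ q1 (σ i) ∧ q2 (σ j) ≠ q2 (σ i)

/-- Greedy step, iterated `n` times: if every element conflicts (relation `R`) with at most `d`
elements, the last `n` positions can be made free of conflicts with the `k` positions following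
them, as long as `n + k * d ≤ M`. -/
lemma exists_perm_far_from {M : ℕ} (k d : ℕ) (R : Fin M → Fin M → Prop) [DecidableRel R]
    (hR : ∀ a, (Finset.univ.filter (fun b => R a b)).card ≤ d) (n : ℕ) (hn : n + k * d ≤ M) :
    ∃ σ : Equiv.Perm (Fin M), ∀ i j : Fin M, M ≤ (i : ℕ) + n → (i : ℕ) < j →
      (j : ℕ) ≤ i + k → ¬ R (σ j) (σ i) := by
  induction n with
  | zero => exact ⟨1, fun i j h => absurd h (by have := i.2; omega)⟩
  | succ n ih =>
    obtain ⟨σ, hσ⟩ := ih (by omega)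
    let p : Fin M := ⟨M - n - 1, by omega⟩
    have hp : (p : ℕ) = M - n - 1 := rfl
    let W : Finset (Fin M) := Finset.univ.filter (fun j => p < j ∧ (j : ℕ) ≤ p + k)
    let B : Finset (Fin M) := W.biUnion (fun j => Finset.univ.filter (fun b => R (σ j) b))
    have hW : W.card ≤ k := by
      have h : (W.image Fin.val).card ≤ (Finset.Ioc (p : ℕ) (p + k)).card := by
        apply Finset.card_le_card
        intro x hx
        obtain ⟨j, hj, rfl⟩ := Finset.mem_image.1 hx
        have hj' := (Finset.mem_filter.1 hj).2
        exact Finset.mem_Ioc.2 ⟨hj'.1, hj'.2⟩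
      rw [Finset.card_image_of_injective _ Fin.val_injective] at h
      simpa using h
    have hB : B.card ≤ k * d :=
      (Finset.card_biUnion_le_card_mul _ _ d (fun j _ => hR (σ j))).trans
        (Nat.mul_le_mul_right d hW)
    have hS : ((Finset.Iic p).image σ).card = p + 1 := by
      rw [Finset.card_image_of_injective _ σ.injective, Fin.card_Iic]
    obtain ⟨a, haS, haB⟩ := Finset.exists_mem_notMem_of_card_lt_card
      (s := B) (t := (Finset.Iic p).image σ) (by omega)
    obtain ⟨q, hq, rfl⟩ := Finset.mem_image.1 haS
    have hqp : (q : ℕ) ≤ p := Fin.le_def.1 (Finset.mem_Iic.1 hq)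
    have hfix : ∀ j : Fin M, (p : ℕ) < j → Equiv.swap p q j = j := fun j hj =>
      Equiv.swap_apply_of_ne_of_ne (by rintro rfl; omega) (by rintro rfl; omega)
    refine ⟨(Equiv.swap p q).trans σ, fun i j hi hij hjk => ?_⟩
    simp only [Equiv.trans_apply]
    rw [hfix j (by omega)]
    rcases Nat.lt_or_ge (p : ℕ) i with h | h
    · rw [hfix i h]
      exact hσ i j (by omega) hij hjk
    · obtain rfl : i = p := Fin.ext (by omega)
      rw [Equiv.swap_apply_left]
      intro hr
      exact haB (Finset.mem_biUnion.2 ⟨j, Finset.mem_filter.2 ⟨Finset.mem_univ _, hij, hjk⟩,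
        Finset.mem_filter.2 ⟨Finset.mem_univ _, hr⟩⟩)

/-- There is a permutation `σ` making the reordered constraint sequence `(δ,γ)`-far,
i.e. at least `(1-γ)·M` of the `M` positions are `δ`-far. -/
theorem exists_far_sequence {Q1 Q2 : Type} (M ℓ : ℕ) (hM : 2 ≤ M) (hℓ : 1 ≤ ℓ)
    (q1 : Fin M → Q1) (q2 : Fin M → Q2)
    (h1 : ∀ i : Fin M, Nat.card {j : Fin M // q1 j = q1 i} ≤ 3 ^ ℓ)
    (h2 : ∀ i : Fin M, Nat.card {j : Fin M // q2 j = q2 i} ≤ 5 ^ ℓ)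
    (δ γ : ℝ) (hδ : 1 / (M : ℝ) < δ) (hγ : 8 * δ * (5 : ℝ) ^ ℓ ≤ γ) :
    ∃ σ : Equiv.Perm (Fin M),
      (1 - γ) * (M : ℝ) ≤ (Nat.card {i : Fin M // DeltaFarAt M q1 q2 δ σ i} : ℝ) := by
  classical
  have hM0 : (0 : ℝ) < M := by exact_mod_cast (by omega : 0 < M)
  have hδM : 1 < δ * M := (div_lt_iff₀ hM0).1 hδ
  set k := ⌈δ * (M : ℝ)⌉₊ with hk
  have hk2 : (k : ℝ) ≤ 2 * (δ * M) := by
    have := Nat.ceil_lt_add_one (a := δ * (M : ℝ)) (by linarith)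
    linarith
  have hd : ((3 ^ ℓ + 5 ^ ℓ : ℕ) : ℝ) ≤ 2 * 5 ^ ℓ := by
    have : (3 : ℝ) ^ ℓ ≤ 5 ^ ℓ := pow_le_pow_left₀ (by norm_num) (by norm_num) ℓ
    push_cast
    linarith
  have hkd : ((k * (3 ^ ℓ + 5 ^ ℓ) : ℕ) : ℝ) ≤ γ * M := by
    have h5 : (0 : ℝ) < 5 ^ ℓ := by positivity
    calc ((k * (3 ^ ℓ + 5 ^ ℓ) : ℕ) : ℝ) = (k : ℝ) * ((3 ^ ℓ + 5 ^ ℓ : ℕ) : ℝ) := by push_cast; ring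
      _ ≤ (2 * (δ * M)) * (2 * 5 ^ ℓ) := mul_le_mul hk2 hd (by positivity) (by linarith)
      _ ≤ (8 * δ * 5 ^ ℓ) * M := by nlinarith [mul_pos (by linarith : 0 < δ * M) h5]
      _ ≤ γ * M := mul_le_mul_of_nonneg_right hγ hM0.le
  rcases Nat.lt_or_ge M (k * (3 ^ ℓ + 5 ^ ℓ)) with hlt | hge
  -- Here `γ ≥ 1`, so the bound is vacuous.
  · refine ⟨1, le_trans ?_ (Nat.cast_nonneg _)⟩
    have : (M : ℝ) < ((k * (3 ^ ℓ + 5 ^ ℓ) : ℕ) : ℝ) := by exact_mod_cast hlt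
    linarith
  have hR : ∀ a, (Finset.univ.filter (fun b => q1 b = q1 a ∨ q2 b = q2 a)).card
      ≤ 3 ^ ℓ + 5 ^ ℓ := by
    intro a
    rw [Finset.filter_or]
    refine (Finset.card_union_le _ _).trans (Nat.add_le_add ?_ ?_)
    · simpa [Nat.card_eq_fintype_card, Fintype.card_subtype] using h1 a
    · simpa [Nat.card_eq_fintype_card, Fintype.card_subtype] using h2 a
  obtain ⟨σ, hσ⟩ := exists_perm_far_from k (3 ^ ℓ + 5 ^ ℓ)
    (fun a b => q1 b = q1 a ∨ q2 b = q2 a) hR (M - k * (3 ^ ℓ + 5 ^ ℓ)) (by omega)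
  refine ⟨σ, ?_⟩
  have hcard : M - k * (3 ^ ℓ + 5 ^ ℓ) ≤ Nat.card {i : Fin M // DeltaFarAt M q1 q2 δ σ i} := by
    -- The last `M - k * d` positions inject into the far ones.
    let f : Fin (M - k * (3 ^ ℓ + 5 ^ ℓ)) → {i : Fin M // DeltaFarAt M q1 q2 δ σ i} := fun t =>
      ⟨⟨t + k * (3 ^ ℓ + 5 ^ ℓ), by omega⟩, fun j hj hjk => by
        have := hσ _ j (by simp only; omega) hj hjk
        exact ⟨fun h => this (Or.inl h.symm), fun h => this (Or.inr h.symm)⟩⟩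
    have hf : Function.Injective f := fun s t hst => by
      have := congrArg (fun x => ((x.1 : Fin M) : ℕ)) hst
      simp only [f] at this
      exact Fin.ext (by omega)
    simpa using Nat.card_le_card_of_injective f hf
  have hcard' : (M : ℝ) - ((k * (3 ^ ℓ + 5 ^ ℓ) : ℕ) : ℝ)
      ≤ (Nat.card {i : Fin M // DeltaFarAt M q1 q2 δ σ i} : ℝ) := by
    rw [← Nat.cast_sub hge]
    exact_mod_cast hcard
  linarith
end

section
/- Let M ≥ 2 and ℓ ≥ 1 be integers and let r_1,…,r_M be a sequence of constraints such that for every i, at most 3^ℓ indices j ∈ {1,…,M} satisfy q_1(r_j) = q_1(r_i) and at most 5^ℓ indices j satisfy q_2(r_j) = q_2(r_i). Then for every real δ with 1/M < δ and every real γ ≥ 16·δ·5^ℓ, at least half of all M! permutations σ of {1,…,M} are such that the reordered sequence r_{σ(1)},…,r_{σ(M)} is (δ,γ)-far. -/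
open Finset in
/-- For fixed positions `i ≠ j`, the number of permutations with `C (σ i) (σ j)` is at most
`M! * D / (M - 1)` when `D` bounds the number of `C`-neighbours of each element. -/
theorem conflict_perms_card {M : ℕ} (C : Fin M → Fin M → Prop) [DecidableRel C] (D : ℕ)
    (hC : ∀ a, #{b | C a b} ≤ D) (i j : Fin M) (hij : i ≠ j) :
    (M - 1) * #{σ : Equiv.Perm (Fin M) | C (σ i) (σ j)} ≤ Nat.factorial M * D := by
  -- composing with the transposition `(j j')` fixes `i` and moves `j` to `j'`
  have hinv : ∀ j' ∈ univ.erase i, #{σ : Equiv.Perm (Fin M) | C (σ i) (σ j')}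
      = #{σ : Equiv.Perm (Fin M) | C (σ i) (σ j)} := by
    intro j' hj'
    have hj'i : i ≠ j' := (ne_of_mem_erase hj').symm
    refine card_equiv (Equiv.mulRight (Equiv.swap j j')) fun σ => ?_
    simp [Equiv.swap_apply_of_ne_of_ne hij hj'i]
  calc (M - 1) * #{σ : Equiv.Perm (Fin M) | C (σ i) (σ j)}
      = ∑ j' ∈ univ.erase i, #{σ : Equiv.Perm (Fin M) | C (σ i) (σ j')} := by
        rw [sum_congr rfl hinv]; simp
    _ = ∑ σ : Equiv.Perm (Fin M), #{j' ∈ univ.erase i | C (σ i) (σ j')} := by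
        simp only [card_filter]
        exact sum_comm
    _ ≤ ∑ _σ : Equiv.Perm (Fin M), D := by
        refine sum_le_sum fun σ _ => le_trans ?_ (hC (σ i))
        refine card_le_card_of_injOn σ (fun x hx => ?_) σ.injective.injOn
        simp only [coe_filter, Set.mem_ofPred_eq] at hx
        simpa using hx.2
    _ = Nat.factorial M * D := by simp [Fintype.card_perm]

open Finset in
/-- The total number of non-far positions over all permutations, where `k` is the window length. -/
theorem sum_nonfar_le {M : ℕ} (C : Fin M → Fin M → Prop) [DecidableRel C] (D k : ℕ)
    (hC : ∀ a, #{b | C a b} ≤ D) :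
    (M - 1) * ∑ σ : Equiv.Perm (Fin M),
      #{i : Fin M | ∃ j : Fin M, (i : ℕ) < j ∧ (j : ℕ) ≤ i + k ∧ C (σ i) (σ j)}
      ≤ M * (k * (Nat.factorial M * D)) := by
  have hwin : ∀ i : Fin M, #{j : Fin M | (i : ℕ) < j ∧ (j : ℕ) ≤ i + k} ≤ k := by
    intro i
    calc _ ≤ #(Finset.Ioc (i : ℕ) (i + k)) :=
          card_le_card_of_injOn (fun j : Fin M => (j : ℕ)) (fun x hx => by simpa using hx)
            Fin.val_injective.injOn
      _ = k := by simp
  calc _ ≤ (M - 1) * ∑ σ : Equiv.Perm (Fin M), ∑ i : Fin M,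
          ∑ j ∈ {j : Fin M | (i : ℕ) < j ∧ (j : ℕ) ≤ i + k}, if C (σ i) (σ j) then 1 else 0 := by
        gcongr with σ _
        rw [card_filter]
        refine sum_le_sum fun i _ => ?_
        split_ifs with h
        · obtain ⟨j, h1, h2, h3⟩ := h
          rw [← card_filter]
          exact card_pos.mpr ⟨j, by simp only [mem_filter, mem_univ, true_and]; exact ⟨⟨h1, h2⟩, h3⟩⟩
        · exact Nat.zero_le _
    _ = ∑ i : Fin M, ∑ j ∈ {j : Fin M | (i : ℕ) < j ∧ (j : ℕ) ≤ i + k},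
          (M - 1) * #{σ : Equiv.Perm (Fin M) | C (σ i) (σ j)} := by
        rw [sum_comm, mul_sum]
        refine sum_congr rfl fun i _ => ?_
        rw [sum_comm, mul_sum]
        simp only [card_filter]
    _ ≤ ∑ i : Fin M, ∑ j ∈ {j : Fin M | (i : ℕ) < j ∧ (j : ℕ) ≤ i + k},
          (Nat.factorial M * D) := by
        refine sum_le_sum fun i _ => sum_le_sum fun j hj => ?_
        refine conflict_perms_card C D hC i j fun h => ?_
        simp [h] at hj
    _ ≤ ∑ i : Fin M, k * (Nat.factorial M * D) := by
        refine sum_le_sum fun i _ => ?_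
        rw [sum_const, smul_eq_mul]
        exact Nat.mul_le_mul_right _ (hwin i)
    _ = _ := by simp

open Finset in
/-- At least half of all `M!` permutations `σ` make the reordered constraint sequence
`(δ,γ)`-far, i.e. at least `(1-γ)·M` of the `M` positions are `δ`-far. -/
theorem half_of_permutations_far {Q1 Q2 : Type} (M ℓ : ℕ) (hM : 2 ≤ M) (hℓ : 1 ≤ ℓ)
    (q1 : Fin M → Q1) (q2 : Fin M → Q2)
    (h1 : ∀ i : Fin M, Nat.card {j : Fin M // q1 j = q1 i} ≤ 3 ^ ℓ)
    (h2 : ∀ i : Fin M, Nat.card {j : Fin M // q2 j = q2 i} ≤ 5 ^ ℓ)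
    (δ γ : ℝ) (hδ : 1 / (M : ℝ) < δ) (hγ : 16 * δ * (5 : ℝ) ^ ℓ ≤ γ) :
    Nat.factorial M ≤ 2 * Nat.card {σ : Equiv.Perm (Fin M) //
      (1 - γ) * (M : ℝ) ≤ (Nat.card {i : Fin M // DeltaFarAt M q1 q2 δ σ i} : ℝ)} := by
  classical
  set k := ⌈δ * (M : ℝ)⌉₊ with hk
  let C : Fin M → Fin M → Prop := fun a b => q1 b = q1 a ∨ q2 b = q2 a
  have hC : ∀ a, #{b | C a b} ≤ 2 * 5 ^ ℓ := by
    intro a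
    have e1 := h1 a
    have e2 := h2 a
    rw [Nat.card_eq_fintype_card, Fintype.card_subtype] at e1 e2
    have e3 : 3 ^ ℓ ≤ 5 ^ ℓ := Nat.pow_le_pow_left (by norm_num) ℓ
    have e4 : #{b | C a b} ≤ #{b | q1 b = q1 a} + #{b | q2 b = q2 a} := by
      simp only [C, filter_or]
      exact card_union_le _ _
    omega
  have key := sum_nonfar_le C (2 * 5 ^ ℓ) k hC
  set f : Equiv.Perm (Fin M) → ℕ := fun σ =>
    #{i : Fin M | ∃ j : Fin M, (i : ℕ) < j ∧ (j : ℕ) ≤ i + k ∧ C (σ i) (σ j)} with hf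
  have hfar : ∀ σ, (Nat.card {i : Fin M // DeltaFarAt M q1 q2 δ σ i}) + f σ = M := by
    intro σ
    rw [Nat.card_eq_fintype_card, Fintype.card_subtype]
    have e : f σ = #{i : Fin M | ¬ DeltaFarAt M q1 q2 δ σ i} := by
      simp only [hf]
      congr 1
      ext i
      simp only [mem_filter, mem_univ, true_and, DeltaFarAt, C, ← hk]
      push Not
      refine exists_congr fun j => and_congr_right fun _ => and_congr_right fun _ => ?_
      tauto
    rw [e, card_filter_add_card_filter_not]
    simp
  rw [Nat.card_eq_fintype_card, Fintype.card_subtype]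
  set G : Finset (Equiv.Perm (Fin M)) := {σ |
    (1 - γ) * (M : ℝ) ≤ (Nat.card {i : Fin M // DeltaFarAt M q1 q2 δ σ i} : ℝ)} with hG
  have hcompl : #G + #Gᶜ = Nat.factorial M := by
    rw [card_add_card_compl, Fintype.card_perm, Fintype.card_fin]
  have hM0 : (2 : ℝ) ≤ M := by exact_mod_cast hM
  have hδM : 1 < δ * M := by
    rwa [div_lt_iff₀ (by linarith)] at hδ
  have hδ0 : 0 < δ := lt_trans (by positivity) hδ
  have hP : (0 : ℝ) < 5 ^ ℓ := by positivity
  have hγ0 : 0 < γ := lt_of_lt_of_le (by positivity) hγ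
  have hk2 : (k : ℝ) ≤ 2 * δ * M := by
    have := Nat.ceil_lt_add_one (a := δ * (M : ℝ)) (by linarith)
    linarith
  -- Markov's inequality
  have markov : (#Gᶜ : ℝ) * (γ * M) ≤ ∑ σ, (f σ : ℝ) := by
    calc (#Gᶜ : ℝ) * (γ * M) = ∑ σ ∈ Gᶜ, (γ * M) := by simp
      _ ≤ ∑ σ ∈ Gᶜ, (f σ : ℝ) := by
        refine sum_le_sum fun σ hσ => ?_
        simp only [hG, mem_compl, mem_filter, mem_univ, true_and, not_le] at hσ
        have : ((Nat.card {i : Fin M // DeltaFarAt M q1 q2 δ σ i} : ℕ) : ℝ) + f σ = M := by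
          exact_mod_cast hfar σ
        linarith
      _ ≤ ∑ σ, (f σ : ℝ) :=
        sum_le_sum_of_subset_of_nonneg (subset_univ _) fun _ _ _ => by positivity
  have keyR : ((M : ℝ) - 1) * ∑ σ, (f σ : ℝ)
      ≤ M * (k * ((Nat.factorial M : ℝ) * (2 * 5 ^ ℓ))) := by
    have : (((M - 1 : ℕ) : ℝ)) = (M : ℝ) - 1 := by
      rw [Nat.cast_sub (by omega)]; simp
    rw [← this]
    exact_mod_cast key
  set F : ℝ := (Nat.factorial M : ℝ) with hF
  have hF0 : 0 ≤ F := by positivity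
  have s1 : ((M : ℝ) - 1) * (#Gᶜ * (γ * M)) ≤ ((M : ℝ) - 1) * (M * (γ * F / 2)) := by
    calc ((M : ℝ) - 1) * (#Gᶜ * (γ * M)) ≤ ((M : ℝ) - 1) * ∑ σ, (f σ : ℝ) :=
          mul_le_mul_of_nonneg_left markov (by linarith)
      _ ≤ M * (k * (F * (2 * 5 ^ ℓ))) := keyR
      _ ≤ M * (2 * δ * M * (F * (2 * 5 ^ ℓ))) := by gcongr
      _ = M * (M * (F * (4 * (δ * 5 ^ ℓ)))) := by ring
      -- `M ≤ 2 (M - 1)` since `M ≥ 2`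
      _ ≤ M * ((2 * (M - 1)) * (F * (4 * (δ * 5 ^ ℓ)))) := by
          gcongr
          linarith
      _ = ((M : ℝ) - 1) * (M * ((16 * δ * 5 ^ ℓ) * F / 2)) := by ring
      _ ≤ ((M : ℝ) - 1) * (M * (γ * F / 2)) := by
          refine mul_le_mul_of_nonneg_left ?_ (by linarith)
          gcongr
  have s2 := le_of_mul_le_mul_left s1 (by linarith)
  have s3 : (#Gᶜ : ℝ) ≤ F / 2 := by
    have hpos : 0 < γ * M := by positivity
    refine le_of_mul_le_mul_right ?_ hpos
    linarith
  have s4 : 2 * #Gᶜ ≤ Nat.factorial M := by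
    have : 2 * (#Gᶜ : ℝ) ≤ (Nat.factorial M : ℝ) := by linarith
    exact_mod_cast this
  omega
end

section
/- Let M ≥ 2 be an integer, let i ≠ j be two fixed elements of {1,…,M}, and let k be a natural number. Then the number of permutations π of {1,…,M} satisfying π(i) < π(j) ≤ π(i) + k is at most (k/(M−1))·M!. Equivalently, for a uniformly random permutation π of {1,…,M}, the probability that π(i) < π(j) ≤ π(i) + k is at most k/(M−1). -/
/-!
Fix `i`. Precomposing with a transposition of `j` and `l` shows that the number of permutations
with `π i < π l ≤ π i + k` does not depend on `l ≠ i` (`card_close_eq`). Summing over the `M - 1`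
choices of `l` and exchanging the sums counts, for each `π`, the positions `l` whose value lies in
the interval `(π i, π i + k]`; by injectivity of `π` there are at most `k` of them
(`card_close_positions_le`). Hence `(M - 1)` times the desired count is at most `k · M!`.
-/

/-- The permutations `π` with `π i < π l ≤ π i + k`. -/
def closePerms (M : ℕ) (i l : Fin M) (k : ℕ) : Finset (Equiv.Perm (Fin M)) :=
  Finset.univ.filter fun π => (π i : ℕ) < (π l : ℕ) ∧ (π l : ℕ) ≤ (π i : ℕ) + k

lemma card_close_eq {M : ℕ} {i j l : Fin M} (hj : i ≠ j) (hl : i ≠ l) (k : ℕ) :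
    (closePerms M i l k).card = (closePerms M i j k).card := by
  refine Finset.card_equiv (Equiv.mulRight (Equiv.swap j l)) fun π => ?_
  simp [closePerms, Equiv.swap_apply_of_ne_of_ne hj hl]

lemma card_close_positions_le {M : ℕ} (i : Fin M) (k : ℕ) (π : Equiv.Perm (Fin M)) :
    ((Finset.univ.erase i).filter fun l =>
      (π i : ℕ) < (π l : ℕ) ∧ (π l : ℕ) ≤ (π i : ℕ) + k).card ≤ k := by
  have h := Finset.card_le_card_of_injOn (t := Finset.Ioc (π i : ℕ) ((π i : ℕ) + k))
    (s := (Finset.univ.erase i).filter fun l =>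
      (π i : ℕ) < (π l : ℕ) ∧ (π l : ℕ) ≤ (π i : ℕ) + k)
    (fun l => (π l : ℕ)) (fun l hl => by simp at hl ⊢; exact hl.2)
    (fun a _ b _ hab => π.injective (Fin.ext hab))
  simpa using h

lemma pred_mul_card_close_le {M : ℕ} {i j : Fin M} (hij : i ≠ j) (k : ℕ) :
    (M - 1) * (closePerms M i j k).card ≤ k * M.factorial := by
  calc (M - 1) * (closePerms M i j k).card
      = ∑ l ∈ Finset.univ.erase i, (closePerms M i l k).card := by
        rw [Finset.sum_congr rfl fun l hl =>
          card_close_eq hij (Finset.ne_of_mem_erase hl).symm k]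
        simp
    _ = ∑ π : Equiv.Perm (Fin M), ((Finset.univ.erase i).filter fun l =>
          (π i : ℕ) < (π l : ℕ) ∧ (π l : ℕ) ≤ (π i : ℕ) + k).card := by
        simp only [closePerms, Finset.card_filter]
        exact Finset.sum_comm
    _ ≤ ∑ _π : Equiv.Perm (Fin M), k :=
        Finset.sum_le_sum fun π _ => card_close_positions_le i k π
    _ = k * M.factorial := by
        simp [Fintype.card_perm, mul_comm]

/-- For fixed positions `i ≠ j`, the number of permutations `π` of an `M`-element set
with `π i < π j ≤ π i + k` is at most `(k/(M-1))·M!`; equivalently, a uniformly random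
permutation satisfies this event with probability at most `k/(M-1)`. -/
theorem count_close_pairs_permutations (M : ℕ) (hM : 2 ≤ M) (i j : Fin M) (hij : i ≠ j)
    (k : ℕ) :
    (Nat.card {π : Equiv.Perm (Fin M) //
        (π i : ℕ) < (π j : ℕ) ∧ (π j : ℕ) ≤ (π i : ℕ) + k} : ℝ) ≤
      ((k : ℝ) / ((M : ℝ) - 1)) * (Nat.factorial M : ℝ) := by
  have hcard : Nat.card {π : Equiv.Perm (Fin M) //
      (π i : ℕ) < (π j : ℕ) ∧ (π j : ℕ) ≤ (π i : ℕ) + k} = (closePerms M i j k).card := by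
    rw [Nat.card_eq_fintype_card, Fintype.card_subtype, closePerms]
  have hpos : (0 : ℝ) < (M : ℝ) - 1 := by
    have : (2 : ℝ) ≤ M := by exact_mod_cast hM
    linarith
  have h : (((M - 1 : ℕ) : ℝ)) * ((closePerms M i j k).card : ℝ) ≤ k * M.factorial := by
    exact_mod_cast pred_mul_card_close_le hij k
  rw [Nat.cast_sub (by omega), Nat.cast_one] at h
  rw [hcard, div_mul_eq_mul_div, le_div_iff₀ hpos]
  linarith
end

section
/- Let M ≥ 2 and ℓ ≥ 1 be integers and let r_1,…,r_M be a sequence of constraints such that for every i, at most 3^ℓ indices j ∈ {1,…,M} satisfy q_1(r_j) = q_1(r_i) and at most 5^ℓ indices j satisfy q_2(r_j) = q_2(r_i). Fix an index i and a real δ > 0. Then the number of permutations σ of {1,…,M} for which the constraint r_i, occupying position σ^{-1}(i) of the reordered sequence r_{σ(1)},…,r_{σ(M)}, fails to be δ-far in that reordered sequence is at most (2·5^ℓ·⌈δM⌉/(M−1))·M!. -/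
/-- Double transitivity of the symmetric group. -/
lemma exists_perm_two_values {α : Type*} [DecidableEq α] {i k i' k' : α} (h : i ≠ k)
    (h' : i' ≠ k') : ∃ τ : Equiv.Perm α, τ i = i' ∧ τ k = k' := by
  refine ⟨Equiv.swap (Equiv.swap i i' k) k' * Equiv.swap i i', ?_, ?_⟩
  · rw [Equiv.Perm.mul_apply, Equiv.swap_apply_left]
    apply Equiv.swap_apply_of_ne_of_ne _ h'
    intro e
    apply h
    apply (Equiv.swap i i').injective
    rw [Equiv.swap_apply_left]
    exact e
  · rw [Equiv.Perm.mul_apply, Equiv.swap_apply_left]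

/-- The sets `{σ | σ a = i ∧ σ b = k}`, for `(i, k)` ranging over ordered pairs of distinct elements,
partition the symmetric group into `M(M-1)` classes, which are translates of one another. -/
lemma card_perm_two_values (M : ℕ) {a b i k : Fin M} (hab : a ≠ b) (hik : i ≠ k) :
    (M * M - M) * (Finset.univ.filter
      (fun σ : Equiv.Perm (Fin M) => σ a = i ∧ σ b = k)).card = M.factorial := by
  have hfib := Finset.card_eq_sum_card_fiberwise
    (f := fun σ : Equiv.Perm (Fin M) => (σ a, σ b)) (s := Finset.univ)
    (t := (Finset.univ : Finset (Fin M)).offDiag)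
    (by intro σ _; simpa using hab)
  rw [Finset.card_univ, Fintype.card_perm, Fintype.card_fin] at hfib
  rw [hfib, Finset.sum_congr rfl (g := fun _ => (Finset.univ.filter
      (fun σ : Equiv.Perm (Fin M) => σ a = i ∧ σ b = k)).card), Finset.sum_const,
      Finset.offDiag_card]
  · simp
  · rintro ⟨i', k'⟩ h'
    have h' : i' ≠ k' := by simpa using h'
    obtain ⟨τ, h1, h2⟩ := exists_perm_two_values h' hik
    refine Finset.card_equiv (Equiv.mulLeft τ) ?_
    intro σ
    simp [← h1, ← h2]

/-- There are at most `M * c` pairs of positions `a < b ≤ a + c`. -/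
lemma card_close_pairs (M c : ℕ) :
    (Finset.univ.filter (fun p : Fin M × Fin M =>
      (p.1 : ℕ) < p.2 ∧ (p.2 : ℕ) ≤ p.1 + c)).card ≤ M * c := by
  calc _ ≤ ((Finset.univ : Finset (Fin M)) ×ˢ Finset.Icc 1 c).card := by
        -- A pair is determined by its first entry and the gap `b - a ∈ [1, c]`.
        refine Finset.card_le_card_of_injOn (fun p => (p.1, (p.2 : ℕ) - p.1)) ?_ ?_
        · rintro ⟨a, b⟩ h
          simp at h ⊢
          omega
        · rintro ⟨a, b⟩ h ⟨a', b'⟩ h' e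
          simp at h h' e ⊢
          obtain ⟨rfl, e⟩ := e
          refine ⟨rfl, Fin.ext ?_⟩
          omega
    _ = M * c := by simp

/-- For a fixed constraint index `i`, the number of permutations `σ` for which the
constraint `r_i` (occupying position `σ⁻¹ i` of the reordered sequence) fails to be
`δ`-far is at most `(2·5^ℓ·⌈δM⌉/(M-1))·M!`. -/
theorem count_permutations_failing_far {Q1 Q2 : Type} (M ℓ : ℕ) (hM : 2 ≤ M) (hℓ : 1 ≤ ℓ)
    (q1 : Fin M → Q1) (q2 : Fin M → Q2)
    (h1 : ∀ i : Fin M, Nat.card {j : Fin M // q1 j = q1 i} ≤ 3 ^ ℓ)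
    (h2 : ∀ i : Fin M, Nat.card {j : Fin M // q2 j = q2 i} ≤ 5 ^ ℓ)
    (i : Fin M) (δ : ℝ) (hδ : 0 < δ) :
    (Nat.card {σ : Equiv.Perm (Fin M) // ¬ DeltaFarAt M q1 q2 δ σ (σ⁻¹ i)} : ℝ) ≤
      2 * (5 : ℝ) ^ ℓ * (⌈δ * (M : ℝ)⌉₊ : ℝ) / ((M : ℝ) - 1) * (Nat.factorial M : ℝ) := by
  classical
  set c := ⌈δ * (M : ℝ)⌉₊ with hc
  let B : Finset (Fin M) :=
    Finset.univ.filter (fun k => k ≠ i ∧ (q1 k = q1 i ∨ q2 k = q2 i))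
  let P : Finset (Fin M × Fin M) :=
    Finset.univ.filter (fun p => (p.1 : ℕ) < p.2 ∧ (p.2 : ℕ) ≤ p.1 + c)
  let S : Fin M × (Fin M × Fin M) → Finset (Equiv.Perm (Fin M)) := fun x =>
    Finset.univ.filter (fun σ => σ x.2.1 = i ∧ σ x.2.2 = x.1)
  have hB : B.card ≤ 2 * 5 ^ ℓ := by
    have e1 := h1 i
    have e2 := h2 i
    rw [Nat.card_eq_fintype_card, Fintype.card_subtype] at e1 e2
    have hsub : B ⊆ Finset.univ.filter (fun k => q1 k = q1 i) ∪
        Finset.univ.filter (fun k => q2 k = q2 i) := by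
      intro k hk
      simp [B] at hk ⊢
      exact hk.2
    have := (Finset.card_le_card hsub).trans (Finset.card_union_le _ _)
    have h35 : 3 ^ ℓ ≤ 5 ^ ℓ := Nat.pow_le_pow_left (by norm_num) ℓ
    omega
  have hP : P.card ≤ M * c := card_close_pairs M c
  have hcover : Finset.univ.filter
      (fun σ : Equiv.Perm (Fin M) => ¬ DeltaFarAt M q1 q2 δ σ (σ⁻¹ i)) ⊆ (B ×ˢ P).biUnion S := by
    intro σ hσ
    rw [Finset.mem_filter] at hσ
    have h := hσ.2
    unfold DeltaFarAt at h
    push Not at h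
    obtain ⟨j, hj1, hj2, hj3⟩ := h
    have hinv : σ (σ⁻¹ i) = i := Equiv.apply_symm_apply σ i
    rw [hinv] at hj3
    refine Finset.mem_biUnion.2 ⟨(σ j, (σ⁻¹ i, j)), ?_, ?_⟩
    · refine Finset.mem_product.2 ⟨?_, ?_⟩
      · refine Finset.mem_filter.2 ⟨Finset.mem_univ _, ?_, ?_⟩
        · intro e
          have hj : j = σ⁻¹ i := σ.injective (Eq.trans e hinv.symm)
          rw [← hj] at hj1
          exact lt_irrefl _ hj1
        · by_cases hq : q1 (σ j) = q1 i
          · exact Or.inl hq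
          · exact Or.inr (hj3 hq)
      · exact Finset.mem_filter.2 ⟨Finset.mem_univ _, hj1, hj2⟩
    · exact Finset.mem_filter.2 ⟨Finset.mem_univ _, hinv, rfl⟩
  have hS : ∀ x ∈ B ×ˢ P, (M * M - M) * (S x).card = M.factorial := by
    rintro ⟨k, a, b⟩ hx
    obtain ⟨hk, hp⟩ := Finset.mem_product.1 hx
    have hk := (Finset.mem_filter.1 hk).2.1
    have hp := (Finset.mem_filter.1 hp).2.1
    exact card_perm_two_values M (fun e => by rw [e] at hp; exact lt_irrefl _ hp) (Ne.symm hk)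
  have hmain : (M * M - M) * Nat.card {σ : Equiv.Perm (Fin M) //
      ¬ DeltaFarAt M q1 q2 δ σ (σ⁻¹ i)} ≤ 2 * 5 ^ ℓ * (M * c) * M.factorial := by
    rw [Nat.card_eq_fintype_card, Fintype.card_subtype]
    calc _ ≤ (M * M - M) * ∑ x ∈ B ×ˢ P, (S x).card :=
          Nat.mul_le_mul_left _ ((Finset.card_le_card hcover).trans Finset.card_biUnion_le)
      _ = B.card * P.card * M.factorial := by
          rw [Finset.mul_sum, Finset.sum_congr rfl hS, Finset.sum_const, Finset.card_product,
            smul_eq_mul]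
      _ ≤ _ := Nat.mul_le_mul_right _ (Nat.mul_le_mul hB hP)
  have hMR : (2 : ℝ) ≤ M := by exact_mod_cast hM
  have hreal : ((M : ℝ) * M - M) * (Nat.card {σ : Equiv.Perm (Fin M) //
      ¬ DeltaFarAt M q1 q2 δ σ (σ⁻¹ i)} : ℝ) ≤ 2 * 5 ^ ℓ * (M * c) * M.factorial := by
    have := (Nat.cast_le (α := ℝ)).2 hmain
    rw [Nat.cast_mul, Nat.cast_sub (Nat.le_mul_self M)] at this
    push_cast at this
    exact this
  rw [div_mul_eq_mul_div, le_div_iff₀ (by linarith)]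
  refine le_of_mul_le_mul_left ?_ (show (0 : ℝ) < M by linarith)
  linarith
end

section
/- In the instance graph G built from constraints r_1,…,r_M, suppose there is an assignment f mapping each query to an answer such that for every i, π_i(f(q_1(r_i))) = f(q_2(r_i)) (i.e., f satisfies every constraint). Then there exists a pricing p and an s–t path P that is a shortest path with respect to p whose revenue is exactly M. -/
/-!
Let `a` be called correct for constraint `i` when it is the answer `f1 (q1 i)` chosen by the
assignment. Correct variable edges get price `1` and all others price `M` (`goodPrice`). The path
through the correct edge of every gadget has cost and revenue `M` (`exists_goodPath`).

It is a shortest path by LP duality: the potential `pot` grows along each edge by at most the cost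
of that edge (`pot_edge`), so every `s`–`t` path costs at least `pot t - pot s = M` (`pot_path`).
The one place where the assignment matters is that, `f` satisfying every constraint, no shortcut
joins two correct answers; a shortcut touching an incorrect answer is harmless, since the
potential jumps from `0` to `M` across an incorrect variable edge.
-/

open Classical

namespace StackSP

/-- The data from which the Stackelberg shortest-path instance graph is built:
a sequence of `M` constraints, where constraint `i` has first query `q1 i`, second
query `q2 i`, answer set `{a // valid1 i a}` (depending only on `q1 i`), answer set
`{b // valid2 i b}` for the second query (depending only on `q2 i`), and `ans i`
maps each answer `a` for the first query to its unique consistent answer for the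
second query. -/
structure Inst where
  M : ℕ
  Mpos : 0 < M
  Q1 : Type
  Q2 : Type
  A1 : Type
  A2 : Type
  q1 : Fin M → Q1
  q2 : Fin M → Q2
  valid1 : Fin M → A1 → Prop
  valid2 : Fin M → A2 → Prop
  ans : Fin M → A1 → A2
  valid1_congr : ∀ i j a, q1 i = q1 j → (valid1 i a ↔ valid1 j a)
  valid2_congr : ∀ i j b, q2 i = q2 j → (valid2 i b ↔ valid2 j b)
  ans_valid : ∀ i a, valid1 i a → valid2 i (ans i a)
  valid1_nonempty : ∀ i, ∃ a, valid1 i a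
  valid2_nonempty : ∀ i, ∃ b, valid2 i b

/-- Vertices of the instance graph: for each gadget `i`, a source `src i`, a sink
`snk i`, and intermediate vertices `u i a`, `v i a` for each answer `a`. -/
inductive Vtx (M : ℕ) (A1 : Type) where
  | src : Fin M → Vtx M A1
  | snk : Fin M → Vtx M A1
  | u : Fin M → A1 → Vtx M A1
  | v : Fin M → A1 → Vtx M A1

variable (I : Inst)

/-- Constraint `i` is `δ`-far: no constraint `j` with `i < j ≤ i + ⌈δM⌉` shares a query
with it. -/
def Far (δ : ℝ) (i : Fin I.M) : Prop :=
  ∀ j : Fin I.M, (i : ℕ) < (j : ℕ) → (j : ℕ) ≤ (i : ℕ) + ⌈δ * (I.M : ℝ)⌉₊ →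
    I.q1 i ≠ I.q1 j ∧ I.q2 i ≠ I.q2 j

/-- The variable (pricable) edges `u i a → v i a`. -/
def IsVarEdge : Vtx I.M I.A1 → Vtx I.M I.A1 → Prop
  | .u i a, .v j b => i = j ∧ a = b ∧ I.valid1 i a
  | _, _ => False

/-- The shortcut edges: `v i a → u j b` for `i < j` with both constraints `δ`-far and
either `q1 i = q1 j` with `a ≠ b`, or `q2 i = q2 j` with inconsistent second answers.
Such a shortcut has fixed cost `(j - i)/2`. -/
def IsShortcut (δ : ℝ) : Vtx I.M I.A1 → Vtx I.M I.A1 → Prop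
  | .v i a, .u j b =>
      (i : ℕ) < (j : ℕ) ∧ Far I δ i ∧ Far I δ j ∧ I.valid1 i a ∧ I.valid1 j b ∧
        ((I.q1 i = I.q1 j ∧ a ≠ b) ∨ (I.q2 i = I.q2 j ∧ I.ans i a ≠ I.ans j b))
  | _, _ => False

/-- The non-shortcut fixed cost edges: `src i → snk i` (cost 1), `src i → u i a` and
`v i a → snk i` (cost 0), and the chaining edges `snk i → src (i+1)` (cost 0). -/
def IsFixedBasic : Vtx I.M I.A1 → Vtx I.M I.A1 → Prop
  | .src i, .snk j => i = j
  | .src i, .u j a => i = j ∧ I.valid1 j a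
  | .v i a, .snk j => i = j ∧ I.valid1 i a
  | .snk i, .src j => (j : ℕ) = (i : ℕ) + 1
  | _, _ => False

/-- The edges of the instance graph `G` (with farness parameter `δ`). -/
def IsEdge (δ : ℝ) (x y : Vtx I.M I.A1) : Prop :=
  IsVarEdge I x y ∨ IsShortcut I δ x y ∨ IsFixedBasic I x y

/-- The cost of an edge under the pricing `p` of the variable edges: a variable edge
`u i a → v i a` costs `p i a`, a shortcut `v i a → u j b` costs `(j-i)/2`, the edge
`src i → snk i` costs `1`, and all other fixed edges cost `0`. -/
noncomputable def edgeCost (p : Fin I.M → I.A1 → ℝ) : Vtx I.M I.A1 → Vtx I.M I.A1 → ℝ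
  | .u i a, .v _ _ => p i a
  | .v i _, .u j _ => (((j : ℕ) : ℝ) - ((i : ℕ) : ℝ)) / 2
  | .src _, .snk _ => 1
  | _, _ => 0

/-- Total cost of a path (a list of vertices) under pricing `p`. -/
noncomputable def pathCost (p : Fin I.M → I.A1 → ℝ) (P : List (Vtx I.M I.A1)) : ℝ :=
  ((P.zip P.tail).map fun e => edgeCost I p e.1 e.2).sum

/-- The revenue of a path: the sum of the prices of the variable edges on it. -/
noncomputable def revenue (p : Fin I.M → I.A1 → ℝ) (P : List (Vtx I.M I.A1)) : ℝ :=
  ((P.zip P.tail).map fun e =>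
    match e with
    | (Vtx.u i a, Vtx.v _ _) => p i a
    | _ => 0).sum

/-- The total fixed cost of the fixed-cost edges on a path. -/
noncomputable def fixedCostSum (P : List (Vtx I.M I.A1)) : ℝ :=
  ((P.zip P.tail).map fun e =>
    match e with
    | (Vtx.src _, Vtx.snk _) => (1 : ℝ)
    | (Vtx.v i _, Vtx.u j _) => (((j : ℕ) : ℝ) - ((i : ℕ) : ℝ)) / 2
    | _ => 0).sum

/-- The total fixed cost of the shortcut edges on a path. -/
noncomputable def shortcutCostSum (δ : ℝ) (P : List (Vtx I.M I.A1)) : ℝ :=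
  ((P.zip P.tail).map fun e =>
    if IsShortcut I δ e.1 e.2 then edgeCost I (fun _ _ => 0) e.1 e.2 else 0).sum

/-- The global source `s = s_1`. -/
def srcV : Vtx I.M I.A1 := Vtx.src ⟨0, I.Mpos⟩

/-- The global sink `t = t_M`. -/
def snkV : Vtx I.M I.A1 := Vtx.snk ⟨I.M - 1, Nat.sub_lt I.Mpos Nat.one_pos⟩

/-- An `s`–`t` path in the instance graph. -/
def IsSTPath (δ : ℝ) (P : List (Vtx I.M I.A1)) : Prop :=
  P.Chain' (IsEdge I δ) ∧ P.head? = some (srcV I) ∧ P.getLast? = some (snkV I)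

/-- A shortest `s`–`t` path with respect to the pricing `p`. -/
def IsShortestSTPath (δ : ℝ) (p : Fin I.M → I.A1 → ℝ) (P : List (Vtx I.M I.A1)) : Prop :=
  IsSTPath I δ P ∧ ∀ Q, IsSTPath I δ Q → pathCost I p P ≤ pathCost I p Q

/-- A source-sink subpath of `P`: a (contiguous) subpath of `P` starting at some source
`src i` and ending at some sink `snk j` with `i ≤ j`. -/
def IsSSSubpath (Q P : List (Vtx I.M I.A1)) : Prop :=
  Q <:+: P ∧ ∃ i j : Fin I.M, (i : ℕ) ≤ (j : ℕ) ∧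
    Q.head? = some (Vtx.src i) ∧ Q.getLast? = some (Vtx.snk j)


/-- Price `1` on the variable edges chosen by the assignment, and `M` on all others. -/
noncomputable def goodPrice (f1 : I.Q1 → I.A1) (i : Fin I.M) (a : I.A1) : ℝ :=
  if a = f1 (I.q1 i) then 1 else I.M

/-- The dual certificate: a lower bound for the distance from `s` under `goodPrice`. -/
noncomputable def pot (f1 : I.Q1 → I.A1) : Vtx I.M I.A1 → ℝ
  | .src i => ((i : ℕ) : ℝ)
  | .snk i => ((i : ℕ) : ℝ) + 1
  | .u i a => if a = f1 (I.q1 i) then ((i : ℕ) : ℝ) else 0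
  | .v i a => if a = f1 (I.q1 i) then ((i : ℕ) : ℝ) + 1 else I.M

theorem pot_edge (δ : ℝ) (f1 : I.Q1 → I.A1) (f2 : I.Q2 → I.A2)
    (hsat : ∀ i, I.ans i (f1 (I.q1 i)) = f2 (I.q2 i)) (x y : Vtx I.M I.A1)
    (h : IsEdge I δ x y) :
    pot I f1 y ≤ pot I f1 x + edgeCost I (goodPrice I f1) x y := by
  have hlt : ∀ i : Fin I.M, ((i : ℕ) : ℝ) + 1 ≤ I.M := fun i => by exact_mod_cast i.2
  have hnn : ∀ i : Fin I.M, (0 : ℝ) ≤ ((i : ℕ) : ℝ) := fun i => Nat.cast_nonneg _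
  rcases h with h | h | h
  · cases x <;> cases y <;> simp only [IsVarEdge] at h
    obtain ⟨rfl, rfl, -⟩ := h
    simp only [pot, edgeCost, goodPrice]
    split_ifs <;> linarith
  · cases x <;> cases y <;> simp only [IsShortcut] at h
    rename_i i a j b
    obtain ⟨hij, -, -, -, -, h⟩ := h
    have hij' : ((i : ℕ) : ℝ) < ((j : ℕ) : ℝ) := by exact_mod_cast hij
    have hi := hnn i
    have hj := hnn j
    have hj' := hlt j
    simp only [pot, edgeCost]
    split_ifs with hb ha ha
    · -- Both answers are correct, hence consistent: there is no such shortcut.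
      exfalso
      subst ha hb
      rcases h with ⟨hq, hne⟩ | ⟨hq, hne⟩
      · exact hne (by rw [hq])
      · exact hne (by rw [hsat, hsat, hq])
    all_goals linarith
  · cases x <;> cases y <;> simp only [IsFixedBasic] at h
    · subst h
      simp [pot, edgeCost]
    · obtain ⟨rfl, -⟩ := h
      simp only [pot, edgeCost]
      split_ifs <;> simp
    · simp [pot, edgeCost, h]
    · obtain ⟨rfl, -⟩ := h
      simp only [pot, edgeCost]
      split_ifs
      · simp
      · simpa using hlt _

theorem pathCost_cons_cons (p : Fin I.M → I.A1 → ℝ) (x y : Vtx I.M I.A1)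
    (L : List (Vtx I.M I.A1)) :
    pathCost I p (x :: y :: L) = edgeCost I p x y + pathCost I p (y :: L) := by
  simp [pathCost]

theorem pot_path (δ : ℝ) (f1 : I.Q1 → I.A1) (f2 : I.Q2 → I.A2)
    (hsat : ∀ i, I.ans i (f1 (I.q1 i)) = f2 (I.q2 i)) (t : Vtx I.M I.A1)
    (L : List (Vtx I.M I.A1)) :
    ∀ x, (x :: L).IsChain (IsEdge I δ) → (x :: L).getLast? = some t →
      pot I f1 t ≤ pot I f1 x + pathCost I (goodPrice I f1) (x :: L) := by
  induction L with
  | nil =>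
    intro x _ hl
    have : x = t := by simpa using hl
    subst this
    simp [pathCost]
  | cons y L ih =>
    intro x hc hl
    rw [List.isChain_cons_cons] at hc
    rw [List.getLast?_cons_cons] at hl
    have h1 := ih y hc.2 hl
    have h2 := pot_edge I δ f1 f2 hsat x y hc.1
    rw [pathCost_cons_cons]
    linarith

/-- From the source of gadget `k`, when `n` further gadgets follow it, the path along the correct
answers reaches `t` with cost and revenue `n + 1`. -/
theorem exists_goodPath (δ : ℝ) (f1 : I.Q1 → I.A1)
    (hf1 : ∀ i, I.valid1 i (f1 (I.q1 i))) (n : ℕ) :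
    ∀ k : Fin I.M, (k : ℕ) + n + 1 = I.M → ∃ L : List (Vtx I.M I.A1),
      (Vtx.src k :: L).IsChain (IsEdge I δ) ∧ (Vtx.src k :: L).getLast? = some (snkV I) ∧
      pathCost I (goodPrice I f1) (Vtx.src k :: L) = n + 1 ∧
      revenue I (goodPrice I f1) (Vtx.src k :: L) = n + 1 := by
  induction n with
  | zero =>
    intro k hk
    refine ⟨[Vtx.u k (f1 (I.q1 k)), Vtx.v k (f1 (I.q1 k)), Vtx.snk k], ?_, ?_, ?_, ?_⟩
    · simp [IsEdge, IsVarEdge, IsShortcut, IsFixedBasic, hf1]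
    · simp only [List.getLast?_cons_cons, List.getLast?_singleton, snkV, Option.some.injEq,
        Vtx.snk.injEq, Fin.ext_iff]
      omega
    · simp [pathCost, edgeCost, goodPrice]
    · simp [revenue, goodPrice]
  | succ n ih =>
    intro k hk
    obtain ⟨L, hc, hl, hp, hr⟩ := ih ⟨k + 1, by omega⟩ (by simp only; omega)
    refine ⟨Vtx.u k (f1 (I.q1 k)) :: Vtx.v k (f1 (I.q1 k)) :: Vtx.snk k ::
      Vtx.src ⟨k + 1, by omega⟩ :: L, ?_, ?_, ?_, ?_⟩
    · simp only [List.isChain_cons_cons]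
      refine ⟨?_, ?_, ?_, ?_, hc⟩ <;> simp [IsEdge, IsVarEdge, IsShortcut, IsFixedBasic, hf1]
    · simpa only [List.getLast?_cons_cons] using hl
    · simp only [pathCost_cons_cons, hp]
      simp [edgeCost, goodPrice]
      ring
    · simp only [revenue, List.tail_cons] at hr
      simp only [revenue, List.tail_cons, List.zip_cons_cons, List.map_cons, List.sum_cons, hr]
      simp [goodPrice]
      ring

/-- If there is an assignment `f = (f1, f2)` of answers to queries satisfying every
constraint (i.e. `π_i(f(q_1(r_i))) = f(q_2(r_i))` for all `i`), then some pricing `p`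
admits a shortest `s`–`t` path whose revenue is exactly `M`. -/
theorem yes_instance_revenue_eq_M (I : Inst) (δ : ℝ) (hδ : 0 < δ)
    (f1 : I.Q1 → I.A1) (f2 : I.Q2 → I.A2)
    (hf1 : ∀ i, I.valid1 i (f1 (I.q1 i)))
    (hf2 : ∀ i, I.valid2 i (f2 (I.q2 i)))
    (hsat : ∀ i, I.ans i (f1 (I.q1 i)) = f2 (I.q2 i)) :
    ∃ (p : Fin I.M → I.A1 → ℝ) (P : List (Vtx I.M I.A1)),
      (∀ i a, 0 ≤ p i a) ∧ IsShortestSTPath I δ p P ∧ revenue I p P = (I.M : ℝ) := by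
  have hM : ((I.M - 1 : ℕ) : ℝ) + 1 = I.M := by
    have h := I.Mpos
    exact_mod_cast (by omega : I.M - 1 + 1 = I.M)
  obtain ⟨L, hc, hl, hp, hr⟩ := exists_goodPath I δ f1 hf1 (I.M - 1) ⟨0, I.Mpos⟩
    (by have h := I.Mpos; simp only; omega)
  refine ⟨goodPrice I f1, Vtx.src ⟨0, I.Mpos⟩ :: L, ?_, ⟨⟨hc, rfl, hl⟩, ?_⟩, hr.trans hM⟩
  · intro i a
    unfold goodPrice
    split_ifs <;> positivity
  · rintro Q ⟨hQc, hQh, hQl⟩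
    cases Q with
    | nil => simp at hQh
    | cons x Q =>
      have hx : x = srcV I := by simpa using hQh
      subst hx
      have h := pot_path I δ f1 f2 hsat (snkV I) Q _ hQc hQl
      simp only [pot, snkV, srcV] at h
      rw [hp]
      simpa [srcV] using h

end StackSP
end

section
/- In the instance graph G built from constraints r_1,…,r_M, let p be a pricing, let P be a shortest s–t path with respect to p, and let Q be a source-sink subpath of P from s_i to t_j of the alternating form s_i → u^{a_1}_{i_1} ⇒ v^{a_1}_{i_1} → u^{a_2}_{i_2} ⇒ v^{a_2}_{i_2} → ⋯ ⇒ v^{a_q}_{i_q} → t_j, where i_1 = i, i_q = j, each u^{a_x}_{i_x} ⇒ v^{a_x}_{i_x} is a variable edge, and each v^{a_x}_{i_x} → u^{a_{x+1}}_{i_{x+1}} is a shortcut edge. Then the total fixed cost of the shortcut edges on Q equals (j−i)/2, and the revenue of Q satisfies rev(Q) ≤ (len(Q)+1)/2, where len(Q) = j−i+1. -/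
/-!
The alternating subpath `Q` from `s_i` to `t_j` has cost `rev(Q)` plus the cost of its
shortcuts, and the shortcut costs `(i_{x+1} - i_x)/2` telescope to `(j - i)/2`
(`edgeSum_alternating` expands the cost of such a list). Shortcuts go forward, so `i ≤ j`,
and the path `s_i → t_i → s_{i+1} → ⋯ → t_j` is available at cost `j - i + 1`
(`exists_direct_path`). Since `P` is shortest, substituting that path for `Q` cannot lower
the cost (`subpath_cost_le`), so `rev(Q) + (j - i)/2 ≤ j - i + 1`, which is the claimed bound.
-/

open Classical

namespace StackSP

variable (I : Inst)

/-- The sum of a weight `w` over the consecutive pairs of a list of vertices. All cost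
functionals on paths are of this form. -/
def edgeSum {V : Type*} (w : V → V → ℝ) (P : List V) : ℝ :=
  ((P.zip P.tail).map fun e => w e.1 e.2).sum

lemma edgeSum_cons_cons {V : Type*} (w : V → V → ℝ) (x y : V) (L : List V) :
    edgeSum w (x :: y :: L) = w x y + edgeSum w (y :: L) := by
  simp [edgeSum]

lemma edgeSum_singleton {V : Type*} (w : V → V → ℝ) (x : V) : edgeSum w [x] = 0 := by
  simp [edgeSum]

lemma edgeSum_split {V : Type*} (w : V → V → ℝ) (A : List V) (x : V) (L : List V) :
    edgeSum w (A ++ x :: L) = edgeSum w (A ++ [x]) + edgeSum w (x :: L) := by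
  induction A with
  | nil => simp [edgeSum_singleton]
  | cons c A ih =>
    cases A with
    | nil => simp [edgeSum_cons_cons, edgeSum_singleton]
    | cons d A =>
      simp only [List.cons_append, edgeSum_cons_cons] at ih ⊢
      rw [ih]
      ring

/-- Edge sum of a list beginning `c, u 0, v 0, u 1, v 1, …, u n, v n`, with an arbitrary
remainder. -/
lemma edgeSum_alternating {V : Type*} (w : V → V → ℝ) (c : V) (u v : ℕ → V) (n : ℕ)
    (rest : List V) :
    edgeSum w (c :: ((List.range (n + 1)).flatMap (fun x => [u x, v x]) ++ rest)) =
      w c (u 0) + ∑ x ∈ Finset.range (n + 1), w (u x) (v x)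
        + ∑ x ∈ Finset.range n, w (v x) (u (x + 1)) + edgeSum w (v n :: rest) := by
  induction n generalizing rest with
  | zero => simp [edgeSum_cons_cons, add_assoc]
  | succ n ih =>
    rw [List.range_succ, List.flatMap_append, List.append_assoc, ih,
      Finset.sum_range_succ _ (n + 1), Finset.sum_range_succ (fun x => w (v x) (u (x + 1))) n]
    simp only [List.flatMap_cons, List.flatMap_nil, List.cons_append, List.nil_append,
      edgeSum_cons_cons]
    ring

/-- Optimality passes to subpaths: in a shortest path, the segment between `x` and `y`
costs no more than any other path from `x` to `y`. -/
lemma subpath_cost_le (I : Inst) (δ : ℝ) (p : Fin I.M → I.A1 → ℝ)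
    (A B L L' : List (Vtx I.M I.A1)) (x y : Vtx I.M I.A1)
    (hP : IsShortestSTPath I δ p (A ++ x :: (L ++ y :: B)))
    (hL' : (x :: (L' ++ [y])).IsChain (IsEdge I δ)) :
    edgeSum (edgeCost I p) (x :: (L ++ [y])) ≤ edgeSum (edgeCost I p) (x :: (L' ++ [y])) := by
  obtain ⟨⟨hchain, hhead, hlast⟩, hmin⟩ := hP
  have hnew : IsSTPath I δ (A ++ x :: (L' ++ y :: B)) := by
    refine ⟨?_, ?_, ?_⟩
    · have h1 := List.isChain_split.mp hchain
      have h2 : ((x :: L) ++ y :: B).IsChain (IsEdge I δ) := h1.2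
      refine List.isChain_split.mpr ⟨h1.1, ?_⟩
      exact List.isChain_split (l₁ := x :: L').mpr ⟨hL', (List.isChain_split.mp h2).2⟩
    · cases A <;> simpa using hhead
    · simpa [List.getLast?_append, List.getLast?_cons] using hlast
  have key : ∀ K : List (Vtx I.M I.A1), pathCost I p (A ++ x :: (K ++ y :: B)) =
      edgeSum (edgeCost I p) (A ++ [x]) + edgeSum (edgeCost I p) (x :: (K ++ [y])) +
        edgeSum (edgeCost I p) (y :: B) := by
    intro K
    have h := edgeSum_split (edgeCost I p) (x :: K) y B
    simp only [List.cons_append] at h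
    change edgeSum (edgeCost I p) _ = _
    rw [edgeSum_split, h]
    ring
  have h := hmin _ hnew
  rw [key, key] at h
  linarith

/-- The path `s_i → t_i → s_{i+1} → ⋯ → t_{i+n}` using no variable edge; it costs `n + 1`. -/
lemma exists_direct_path (I : Inst) (δ : ℝ) (p : Fin I.M → I.A1 → ℝ) (n : ℕ)
    (i j : Fin I.M) (h : (j : ℕ) = i + n) :
    ∃ L : List (Vtx I.M I.A1),
      (Vtx.src i :: (L ++ [Vtx.snk j])).IsChain (IsEdge I δ) ∧
        edgeSum (edgeCost I p) (Vtx.src i :: (L ++ [Vtx.snk j])) = n + 1 := by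
  induction n generalizing i with
  | zero =>
    obtain rfl : j = i := Fin.ext (by simpa using h)
    exact ⟨[], by simp [IsEdge, IsFixedBasic],
      by simp [edgeSum_cons_cons, edgeSum_singleton, edgeCost]⟩
  | succ n ih =>
    obtain ⟨L, hL, hc⟩ := ih ⟨i + 1, by omega⟩ (by simp only; omega)
    refine ⟨Vtx.snk i :: Vtx.src ⟨i + 1, by omega⟩ :: L, ?_, ?_⟩
    · simp only [List.cons_append, List.isChain_cons_cons]
      exact ⟨by simp [IsEdge, IsFixedBasic], by simp [IsEdge, IsFixedBasic], hL⟩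
    · simp only [List.cons_append, edgeSum_cons_cons] at hc ⊢
      rw [hc]
      simp only [edgeCost]
      push_cast
      ring

/-- If `Q` is a source-sink subpath of a shortest path `P`, from `src i` to `snk j`, of
the alternating form
`s_i → u^{a_1}_{i_1} ⇒ v^{a_1}_{i_1} → u^{a_2}_{i_2} ⇒ v^{a_2}_{i_2} → ⋯ ⇒ v^{a_q}_{i_q} → t_j`
(with `i_1 = i`, `i_q = j`, variable edges `u ⇒ v` and shortcut edges `v → u`), then the
total fixed cost of the shortcuts on `Q` is `(j-i)/2` and `rev(Q) ≤ (len(Q)+1)/2` where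
`len(Q) = j - i + 1`. -/
theorem shortcut_alternating_subpath_revenue (I : Inst) (δ : ℝ) (hδ : 0 < δ)
    (p : Fin I.M → I.A1 → ℝ) (hp : ∀ i a, 0 ≤ p i a)
    (P : List (Vtx I.M I.A1)) (hP : IsShortestSTPath I δ p P)
    (i j : Fin I.M) (q : ℕ) (hq : 1 ≤ q) (idx : ℕ → Fin I.M) (a : ℕ → I.A1)
    (Q : List (Vtx I.M I.A1))
    (hQdef : Q = Vtx.src i ::
        (((List.range q).flatMap fun x => [Vtx.u (idx x) (a x), Vtx.v (idx x) (a x)]) ++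
          [Vtx.snk j]))
    (hfirst : idx 0 = i) (hlast : idx (q - 1) = j)
    (hvar : ∀ x < q, I.valid1 (idx x) (a x))
    (hshort : ∀ x, x + 1 < q →
      IsShortcut I δ (Vtx.v (idx x) (a x)) (Vtx.u (idx (x + 1)) (a (x + 1))))
    (hsub : Q <:+: P) :
    shortcutCostSum I δ Q = (((j : ℕ) : ℝ) - ((i : ℕ) : ℝ)) / 2 ∧
      revenue I p Q ≤ ((((j : ℕ) : ℝ) - ((i : ℕ) : ℝ) + 1) + 1) / 2 := by
  obtain ⟨n, rfl⟩ : ∃ n, q = n + 1 := ⟨q - 1, by omega⟩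
  rw [Nat.add_sub_cancel] at hlast
  subst hfirst hlast
  have htel : ∑ x ∈ Finset.range n,
      (((idx (x + 1) : ℕ) : ℝ) - ((idx x : ℕ) : ℝ)) / 2 =
        (((idx n : ℕ) : ℝ) - ((idx 0 : ℕ) : ℝ)) / 2 := by
    rw [← Finset.sum_div, Finset.sum_range_sub (fun x => ((idx x : ℕ) : ℝ))]
  have hmono : ∀ m, m ≤ n → (idx 0 : ℕ) ≤ idx m := by
    intro m
    induction m with
    | zero => simp
    | succ m ih =>
      intro hm
      exact (ih (by omega)).trans (hshort m (by omega)).1.le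
  have halt : ∀ w : Vtx I.M I.A1 → Vtx I.M I.A1 → ℝ, edgeSum w Q =
      w (.src (idx 0)) (.u (idx 0) (a 0)) +
        ∑ x ∈ Finset.range (n + 1), w (.u (idx x) (a x)) (.v (idx x) (a x)) +
        ∑ x ∈ Finset.range n, w (.v (idx x) (a x)) (.u (idx (x + 1)) (a (x + 1))) +
        w (.v (idx n) (a n)) (.snk (idx n)) := by
    intro w
    rw [hQdef, edgeSum_alternating w _ (fun x => Vtx.u (idx x) (a x))
      (fun x => Vtx.v (idx x) (a x)), edgeSum_cons_cons, edgeSum_singleton, add_zero]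
  refine ⟨?_, ?_⟩
  · have h := halt fun x y => if IsShortcut I δ x y then edgeCost I (fun _ _ => 0) x y else 0
    rw [Finset.sum_congr rfl fun x hx =>
      if_pos (hshort x (by have := Finset.mem_range.mp hx; omega))] at h
    refine Eq.trans h ?_
    simpa [IsShortcut, edgeCost] using htel
  · have hrev : revenue I p Q = ∑ x ∈ Finset.range (n + 1), p (idx x) (a x) := by
      have h := halt fun x y => match (x, y) with
        | (Vtx.u i a, Vtx.v _ _) => p i a
        | _ => 0
      refine Eq.trans h ?_
      simp
    have hcost := halt (edgeCost I p)
    simp only [edgeCost, htel] at hcost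
    obtain ⟨L', hL', hc⟩ := exists_direct_path I δ p ((idx n : ℕ) - idx 0) (idx 0) (idx n)
      (by have := hmono n le_rfl; omega)
    rw [Nat.cast_sub (hmono n le_rfl)] at hc
    obtain ⟨A, B, rfl⟩ := hsub
    rw [hQdef] at hP hcost
    have hle := subpath_cost_le I δ p A B _ L' (.src (idx 0)) (.snk (idx n))
      (by simpa only [List.append_assoc, List.cons_append, List.nil_append] using hP) hL'
    rw [hrev]
    linarith

end StackSP
end

section
/- In the instance graph G built from constraints r_1,…,r_M, let p be a pricing, let P be a shortest s–t path with respect to p, and let Q be a source-sink subpath of P from s_i to t_j of the form s_i → u^{a_i}_i ⇒ v^{a_i}_i → ⋯ → u^{a_j}_j ⇒ v^{a_j}_j → t_j, where u^{a_i}_i ⇒ v^{a_i}_i and u^{a_j}_j ⇒ v^{a_j}_j are variable edges whose prices satisfy p(u^{a_i}_i v^{a_i}_i) ≤ 1 and p(u^{a_j}_j v^{a_j}_j) ≤ 1, and suppose G contains a shortcut edge from v^{a_i}_i to u^{a_j}_j (of cost (j−i)/2) that is not an edge of Q. Then rev(Q) ≤ len(Q)/2 + 2, where len(Q) = j−i+1.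 -/
/-!
Replace the stretch `v i a, mid, u j b` of the shortest path `P` by the single shortcut edge
`v i a → u j b`. The result is again an `s`–`t` path, so minimality of `P` shows that the
replaced stretch costs at most `(j - i) / 2` (`pathCost_detour_le`). Every edge costs at least
the revenue it brings (`revenue_le_pathCost`), so the stretch has revenue at most `(j - i) / 2`.
The only other revenue on `Q` comes from its two outer variable edges, each priced at most `1`.
-/

open Classical

namespace StackSP

variable (I : Inst)

/-- Edge sums over a path add up when the path is cut at a vertex `x`. -/
lemma sum_edges_split {α : Type*} (f : α × α → ℝ) (l₁ l₂ : List α) (x : α) :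
    (((l₁ ++ x :: l₂).zip (l₁ ++ x :: l₂).tail).map f).sum =
      (((l₁ ++ [x]).zip (l₁ ++ [x]).tail).map f).sum +
        (((x :: l₂).zip (x :: l₂).tail).map f).sum := by
  induction l₁ with
  | nil => simp
  | cons y l ih =>
    cases l with
    | nil => simp
    | cons z l =>
      simp only [List.cons_append, List.tail_cons, List.zip_cons_cons, List.map_cons,
        List.sum_cons] at ih ⊢
      rw [ih]
      ring

lemma pathCost_split (p : Fin I.M → I.A1 → ℝ) (l₁ l₂ : List (Vtx I.M I.A1))
    (x : Vtx I.M I.A1) :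
    pathCost I p (l₁ ++ x :: l₂) = pathCost I p (l₁ ++ [x]) + pathCost I p (x :: l₂) :=
  sum_edges_split _ l₁ l₂ x

lemma revenue_split (p : Fin I.M → I.A1 → ℝ) (l₁ l₂ : List (Vtx I.M I.A1))
    (x : Vtx I.M I.A1) :
    revenue I p (l₁ ++ x :: l₂) = revenue I p (l₁ ++ [x]) + revenue I p (x :: l₂) :=
  sum_edges_split _ l₁ l₂ x

/-- The chain hypothesis is needed because the cost `(j - i) / 2` of a pair `v i _, u j _` is
nonnegative only if `i ≤ j`, as for actual shortcuts. -/
lemma revenue_le_pathCost (δ : ℝ) (p : Fin I.M → I.A1 → ℝ) (l : List (Vtx I.M I.A1))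
    (hl : l.IsChain (IsEdge I δ)) : revenue I p l ≤ pathCost I p l := by
  induction l with
  | nil => simp [revenue, pathCost]
  | cons x l ih =>
    cases l with
    | nil => simp [revenue, pathCost]
    | cons y l =>
      rw [List.isChain_cons_cons] at hl
      have h := ih hl.2
      simp only [revenue, pathCost, List.tail_cons, List.zip_cons_cons, List.map_cons,
        List.sum_cons] at h ⊢
      refine add_le_add ?_ h
      have hxy := hl.1
      cases x <;> cases y <;> simp only [edgeCost, le_refl, zero_le_one]
      simp only [IsEdge, IsVarEdge, IsShortcut, IsFixedBasic, false_or, or_false] at hxy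
      have h2 := (Nat.cast_lt (α := ℝ)).2 hxy.1
      linarith

/-- A stretch of a shortest path between the endpoints of an edge `x → y` costs at most as much
as that edge. -/
lemma pathCost_detour_le (δ : ℝ) (p : Fin I.M → I.A1 → ℝ) (A mid B : List (Vtx I.M I.A1))
    (x y : Vtx I.M I.A1) (hP : IsShortestSTPath I δ p (A ++ x :: (mid ++ y :: B)))
    (hxy : IsEdge I δ x y) : pathCost I p (x :: (mid ++ [y])) ≤ edgeCost I p x y := by
  obtain ⟨⟨hc, hh, ht⟩, hmin⟩ := hP
  obtain ⟨hcA, hcx⟩ := List.isChain_split.1 hc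
  have hcB := (List.isChain_split (l₁ := x :: mid).1 hcx).2
  have hst : IsSTPath I δ (A ++ x :: y :: B) := by
    refine ⟨?_, ?_, ?_⟩
    · change (A ++ x :: y :: B).IsChain (IsEdge I δ)
      rw [List.isChain_split, List.isChain_cons_cons]
      exact ⟨hcA, hxy, hcB⟩
    · simpa using hh
    · simpa [List.getLast?_append, List.getLast?_cons] using ht
  have h := hmin _ hst
  rw [pathCost_split I p A (mid ++ y :: B), pathCost_split I p A (y :: B)] at h
  have h1 := pathCost_split I p (x :: mid) B y
  simp only [List.cons_append] at h1
  have h2 : pathCost I p (x :: y :: B) = edgeCost I p x y + pathCost I p (y :: B) := by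
    simp [pathCost]
  linarith

/-- If `Q` is a source-sink subpath of a shortest path `P` of the form
`s_i → u^{a}_i ⇒ v^{a}_i → ⋯ → u^{b}_j ⇒ v^{b}_j → t_j`, the two displayed variable
edges have price at most `1`, and `G` contains a shortcut `v^{a}_i → u^{b}_j`
(of cost `(j-i)/2`) that is not an edge of `Q`, then `rev(Q) ≤ len(Q)/2 + 2` where
`len(Q) = j - i + 1`. -/
theorem induced_shortcut_subpath_revenue (I : Inst) (δ : ℝ) (hδ : 0 < δ)
    (p : Fin I.M → I.A1 → ℝ) (hp : ∀ i a, 0 ≤ p i a)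
    (P : List (Vtx I.M I.A1)) (hP : IsShortestSTPath I δ p P)
    (i j : Fin I.M) (a b : I.A1) (mid : List (Vtx I.M I.A1))
    (Q : List (Vtx I.M I.A1))
    (hQdef : Q = [Vtx.src i, Vtx.u i a, Vtx.v i a] ++ mid ++
        [Vtx.u j b, Vtx.v j b, Vtx.snk j])
    (hsub : Q <:+: P)
    (hpa : p i a ≤ 1) (hpb : p j b ≤ 1)
    (hshort : IsShortcut I δ (Vtx.v i a) (Vtx.u j b))
    (hnotonQ : ¬ ([Vtx.v i a, Vtx.u j b] <:+: Q)) :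
    revenue I p Q ≤ (((j : ℕ) : ℝ) - ((i : ℕ) : ℝ) + 1) / 2 + 2 := by
  obtain ⟨L, R, rfl⟩ := hsub
  have hform : L ++ Q ++ R = (L ++ [Vtx.src i, Vtx.u i a]) ++
      Vtx.v i a :: (mid ++ Vtx.u j b :: ([Vtx.v j b, Vtx.snk j] ++ R)) := by
    simp [hQdef]
  rw [hform] at hP
  have hcost := pathCost_detour_le I δ p _ _ _ _ _ hP (Or.inr (Or.inl hshort))
  have hchain : (Vtx.v i a :: (mid ++ [Vtx.u j b])).IsChain (IsEdge I δ) := by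
    have hc := (List.isChain_split.1 hP.1.1).2
    exact (List.isChain_split (l₁ := Vtx.v i a :: mid).1 hc).1
  have hrev := revenue_le_pathCost I δ p _ hchain
  have hQ : revenue I p Q =
      p i a + revenue I p (Vtx.v i a :: (mid ++ [Vtx.u j b])) + p j b := by
    have hQ' : Q = [Vtx.src i, Vtx.u i a] ++
        Vtx.v i a :: (mid ++ Vtx.u j b :: [Vtx.v j b, Vtx.snk j]) := by simp [hQdef]
    have h3 := revenue_split I p (Vtx.v i a :: mid) [Vtx.v j b, Vtx.snk j] (Vtx.u j b)
    simp only [List.cons_append] at h3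
    rw [hQ', revenue_split, h3]
    have h1 : revenue I p ([Vtx.src i, Vtx.u i a] ++ [Vtx.v i a]) = p i a := by
      simp [revenue]
    have h2 : revenue I p [Vtx.u j b, Vtx.v j b, Vtx.snk j] = p j b := by
      simp [revenue]
    rw [h1, h2]
    ring
  simp only [edgeCost] at hcost
  linarith

end StackSP
end
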